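/- Let G1 and G2 be distribution functions with quantile functions G1^{-1}, G2^{-1} (where G^{-1}(p) = inf{x : G(x) ≥ p} for p ∈ (0,1)), and define the (G1,G2)-transformed rank correlation coefficient κ_{G1,G2}(X1,X2) = ρ(G1^{-1}(F1(X1)), G2^{-1}(F2(X2))) for random variables X1 ~ F1, X2 ~ F2 with continuous margins. Then κ_{G1,G2} is a measure of concordance in the sense of Scarsini if and only if both G1 and G2 are of the same type as some non-degenerate symmetric distribution G with finite second moment (i.e., each Gi is a location-scale transform with positive scale of G, and G is symmetric about some point). -/

import Mathlib

open MeasureTheory ProbabilityTheory Set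

noncomputable section

/-- The uniform distribution on (0,1). -/
def unif01 : Measure ℝ := volume.restrict (Set.Ioo (0:ℝ) 1)

/-- Pearson's correlation coefficient of two real random variables. -/
def pearson {Ω : Type*} [MeasurableSpace Ω] (μ : Measure Ω) (Y1 Y2 : Ω → ℝ) : ℝ :=
  ((∫ ω, Y1 ω * Y2 ω ∂μ) - (∫ ω, Y1 ω ∂μ) * (∫ ω, Y2 ω ∂μ)) /
    Real.sqrt (variance Y1 μ * variance Y2 μ)

/-- The distribution function (CDF) of a measure on ℝ. -/
def cdfOf (ν : Measure ℝ) : ℝ → ℝ := fun x => (ν (Set.Iic x)).toReal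

/-- The quantile function (generalized inverse) of a distribution function. -/
def quantileFn (G : ℝ → ℝ) (p : ℝ) : ℝ := sInf {x : ℝ | p ≤ G x}

/-- The joint distribution function of a measure on ℝ². -/
def cdf2 (μ : Measure (ℝ × ℝ)) (u v : ℝ) : ℝ := (μ (Set.Iic u ×ˢ Set.Iic v)).toReal

/-- A (bivariate) copula: the joint law of a random vector with uniform (0,1) margins. -/
structure IsCopula (μ : Measure (ℝ × ℝ)) : Prop where
  prob : IsProbabilityMeasure μ
  fst_marginal : μ.map Prod.fst = unif01
  snd_marginal : μ.map Prod.snd = unif01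

/-- The comonotone copula M. -/
def comonCopula : Measure (ℝ × ℝ) := unif01.map (fun u => (u, u))

/-- The countermonotone copula W. -/
def counterCopula : Measure (ℝ × ℝ) := unif01.map (fun u => (u, 1 - u))

/-- The independence copula Π. -/
def indepCopula : Measure (ℝ × ℝ) := unif01.prod unif01

/-- A measure of concordance in the sense of Scarsini, as a functional on copulas. -/
structure IsConcordanceMeasure (κ : Measure (ℝ × ℝ) → ℝ) : Prop where
  symmetry : ∀ μ, IsCopula μ → κ (μ.map Prod.swap) = κ μ
  coherence : ∀ μ ν, IsCopula μ → IsCopula ν →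
    (∀ u v, cdf2 μ u v ≤ cdf2 ν u v) → κ μ ≤ κ ν
  range : ∀ μ, IsCopula μ → κ μ ∈ Set.Icc (-1 : ℝ) 1
  comonotone_val : κ comonCopula = 1
  countermonotone_val : κ counterCopula = -1
  independence : κ indepCopula = 0
  change_sign : ∀ μ, IsCopula μ → κ (μ.map (fun p => (p.1, 1 - p.2))) = - κ μ
  continuity : ∀ (Cs : ℕ → Measure (ℝ × ℝ)) (C : Measure (ℝ × ℝ)),
    (∀ n, IsCopula (Cs n)) → IsCopula C →
    (∀ u v, Filter.Tendsto (fun n => cdf2 (Cs n) u v) Filter.atTop (nhds (cdf2 C u v))) →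
    Filter.Tendsto (fun n => κ (Cs n)) Filter.atTop (nhds (κ C))

/-- Two distributions on ℝ are of the same type: one is a positive-scale
location-scale transform of the other. -/
def SameType (ν G : Measure ℝ) : Prop :=
  ∃ a b : ℝ, 0 < a ∧ ν = G.map (fun x => a * x + b)

/-- A distribution on ℝ is symmetric (about some point `m`). -/
def SymmetricDist (G : Measure ℝ) : Prop :=
  ∃ m : ℝ, G.map (fun x => 2 * m - x) = G

/-- A distribution on ℝ is non-degenerate: it is not a point mass. -/
def Nondegenerate (G : Measure ℝ) : Prop := ∀ c : ℝ, G ≠ Measure.dirac c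

/-- A distribution on ℝ has a finite second moment. -/
def FiniteSecondMoment (G : Measure ℝ) : Prop := Integrable (fun x : ℝ => x ^ 2) G

/-!
Write `q₁`, `q₂` for the quantile functions of `G₁`, `G₂`.

If `κ_{G₁, G₂}` is a measure of concordance, its values `1` and `-1` at the comonotone and the
countermonotone copula are equality cases of the Cauchy–Schwarz inequality, so `q₂ u = a q₁ u + b`
and `q₂ (1 - u) = -a q₁ u + d` almost everywhere with the same slope
`a = √(Var G₂ / Var G₁) > 0`. The first relation says that `G₂` is of the same type as `G₁`;
comparing both gives `q₁ (1 - u) = (d - b) / a - q₁ u`, the symmetry of `G₁`.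

Conversely, correlations are invariant under increasing affine maps, so one may take
`G₁ = G₂ = G` symmetric. The algebraic axioms follow by transporting the correlation along maps of
the unit square, where symmetry of `G` turns `u ↦ 1 - u` into a reflection of the quantile function.
Coherence and continuity rest on Hoeffding's identity: the difference of two correlations
with the same margins is proportional to the integral over `ℝ²` of the difference of the joint
distribution functions. Continuity is then dominated convergence, with the Fréchet bounds
`W ≤ C ≤ M` providing the integrable majorant.
-/

section Pearson

variable {Ω Ω' : Type*} [MeasurableSpace Ω] [MeasurableSpace Ω'] {μ : Measure Ω} {X X' Y Y' : Ω → ℝ}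

lemma pearson_comm : pearson μ X Y = pearson μ Y X := by
  simp only [pearson, mul_comm]

lemma pearson_congr_ae (hX : X =ᵐ[μ] X') (hY : Y =ᵐ[μ] Y') :
    pearson μ X Y = pearson μ X' Y' := by
  have hXY : (fun ω => X ω * Y ω) =ᵐ[μ] fun ω => X' ω * Y' ω := hX.mul hY
  simp only [pearson, integral_congr_ae hXY, integral_congr_ae hX, integral_congr_ae hY,
    variance_congr hX, variance_congr hY]

lemma pearson_map {T : Ω → Ω'} {X Y : Ω' → ℝ} (hT : AEMeasurable T μ)
    (hX : AEMeasurable X (μ.map T)) (hY : AEMeasurable Y (μ.map T)) :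
    pearson (μ.map T) X Y = pearson μ (fun ω => X (T ω)) (fun ω => Y (T ω)) := by
  rw [pearson, integral_map hT (hX.fun_mul hY).aestronglyMeasurable,
    integral_map hT hX.aestronglyMeasurable, integral_map hT hY.aestronglyMeasurable,
    variance_map hX hT, variance_map hY hT]
  rfl

lemma pearson_neg_right : pearson μ X (fun ω => -Y ω) = -pearson μ X Y := by
  simp only [pearson, mul_neg, integral_neg, variance_fun_neg]
  ring

lemma variance_ne_zero_of_pearson_ne_zero (h : pearson μ X Y ≠ 0) :
    Var[X; μ] ≠ 0 ∧ Var[Y; μ] ≠ 0 := by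
  constructor <;> intro h0 <;> simp [pearson, h0] at h

lemma pearson_prod [IsProbabilityMeasure μ] {ν : Measure Ω'} [IsProbabilityMeasure ν] (f : Ω → ℝ)
    (g : Ω' → ℝ) : pearson (μ.prod ν) (fun p => f p.1) (fun p => g p.2) = 0 := by
  simp [pearson, integral_prod_mul, integral_fun_fst, integral_fun_snd]

variable [IsProbabilityMeasure μ]

lemma pearson_eq_covariance_div (hX : MemLp X 2 μ) (hY : MemLp Y 2 μ) :
    pearson μ X Y = cov[X, Y; μ] / √(Var[X; μ] * Var[Y; μ]) := by
  rw [covariance_eq_sub hX hY]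
  rfl

lemma pearson_self (hX : MemLp X 2 μ) (h : Var[X; μ] ≠ 0) : pearson μ X X = 1 := by
  rw [pearson_eq_covariance_div hX hX, covariance_self hX.aemeasurable,
    Real.sqrt_mul_self (variance_nonneg X μ), div_self h]

lemma pearson_mul_add {a b c d : ℝ} (ha : 0 < a) (hc : 0 < c) (hX : MemLp X 2 μ)
    (hY : MemLp Y 2 μ) :
    pearson μ (fun ω => a * X ω + b) (fun ω => c * Y ω + d) = pearson μ X Y := by
  have haX := hX.const_mul a
  have hcY := hY.const_mul c
  have haXb : MemLp (fun ω => a * X ω + b) 2 μ := haX.add (memLp_const b)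
  have hcYd : MemLp (fun ω => c * Y ω + d) 2 μ := hcY.add (memLp_const d)
  have hsqrt : √(a ^ 2 * Var[X; μ] * (c ^ 2 * Var[Y; μ])) =
      (a * c) * √(Var[X; μ] * Var[Y; μ]) := by
    rw [mul_mul_mul_comm, ← mul_pow, Real.sqrt_mul (sq_nonneg _), Real.sqrt_sq (by positivity)]
  rw [pearson_eq_covariance_div haXb hcYd, pearson_eq_covariance_div hX hY,
    variance_add_const haX.aestronglyMeasurable,
    variance_add_const hcY.aestronglyMeasurable, variance_const_mul, variance_const_mul,
    covariance_add_const_left (haX.integrable one_le_two),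
    covariance_add_const_right (hcY.integrable one_le_two),
    covariance_const_mul_left, covariance_const_mul_right, hsqrt, ← mul_assoc,
    mul_div_mul_left _ _ (by positivity)]

lemma pearson_const_sub_right (c : ℝ) (hX : MemLp X 2 μ) (hY : MemLp Y 2 μ) :
    pearson μ X (fun ω => c - Y ω) = -pearson μ X Y := by
  have haffine := pearson_mul_add (b := 0) (d := c) one_pos one_pos hX hY.neg
  simp only [one_mul, add_zero, Pi.neg_apply, neg_add_eq_sub] at haffine
  exact haffine.trans pearson_neg_right

lemma variance_normalized_sub (hX : MemLp X 2 μ) (hY : MemLp Y 2 μ) :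
    Var[fun ω => √Var[X; μ] * Y ω - √Var[Y; μ] * X ω; μ] =
      2 * (Var[X; μ] * Var[Y; μ]) * (1 - pearson μ X Y) := by
  have hcov : cov[X, Y; μ] * (√Var[X; μ] * √Var[Y; μ]) =
      Var[X; μ] * Var[Y; μ] * pearson μ X Y := by
    rw [pearson_eq_covariance_div hX hY, ← Real.sqrt_mul (variance_nonneg X μ),
      ← Real.sq_sqrt (mul_nonneg (variance_nonneg X μ) (variance_nonneg Y μ)),
      Real.sqrt_sq (Real.sqrt_nonneg _)]
    rcases eq_or_ne √(Var[X; μ] * Var[Y; μ]) 0 with h | h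
    · simp [h]
    · field_simp
  rw [variance_fun_sub (hY.const_mul _) (hX.const_mul _), variance_const_mul, variance_const_mul,
    covariance_const_mul_left, covariance_const_mul_right, covariance_comm,
    Real.sq_sqrt (variance_nonneg X μ), Real.sq_sqrt (variance_nonneg Y μ)]
  linear_combination -2 * hcov

lemma pearson_le_one (hX : MemLp X 2 μ) (hY : MemLp Y 2 μ) : pearson μ X Y ≤ 1 := by
  by_cases h : pearson μ X Y = 0
  · exact h.trans_le zero_le_one
  obtain ⟨hX0, hY0⟩ := variance_ne_zero_of_pearson_ne_zero h
  have hXpos := (variance_nonneg X μ).lt_of_ne' hX0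
  have hYpos := (variance_nonneg Y μ).lt_of_ne' hY0
  have hvar := variance_nonneg (fun ω => √Var[X; μ] * Y ω - √Var[Y; μ] * X ω) μ
  rw [variance_normalized_sub hX hY] at hvar
  exact sub_nonneg.1 (nonneg_of_mul_nonneg_right hvar (by positivity))

lemma pearson_mem_Icc (hX : MemLp X 2 μ) (hY : MemLp Y 2 μ) : pearson μ X Y ∈ Icc (-1 : ℝ) 1 := by
  have hneg := pearson_le_one hX hY.neg
  rw [show -Y = fun ω => -Y ω from rfl, pearson_neg_right] at hneg
  exact ⟨by linarith, pearson_le_one hX hY⟩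

lemma exists_ae_eq_mul_add_of_pearson_eq_one (hX : AEMeasurable X μ) (hY : AEMeasurable Y μ)
    (h : pearson μ X Y = 1) :
    ∃ b, Y =ᵐ[μ] fun ω => √Var[Y; μ] / √Var[X; μ] * X ω + b := by
  obtain ⟨hX0, hY0⟩ := variance_ne_zero_of_pearson_ne_zero (h.trans_ne one_ne_zero)
  have hX2 := memLp_two_of_variance_ne_zero hX.aestronglyMeasurable hX0
  have hY2 := memLp_two_of_variance_ne_zero hY.aestronglyMeasurable hY0
  have hσ : √Var[X; μ] ≠ 0 := Real.sqrt_ne_zero'.2 ((variance_nonneg X μ).lt_of_ne' hX0)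
  have hvar := variance_normalized_sub hX2 hY2
  rw [h, sub_self, mul_zero] at hvar
  have hdiff : MemLp (fun ω => √Var[X; μ] * Y ω - √Var[Y; μ] * X ω) 2 μ :=
    (hY2.const_mul _).sub (hX2.const_mul _)
  refine ⟨μ[fun ω => √Var[X; μ] * Y ω - √Var[Y; μ] * X ω] / √Var[X; μ], ?_⟩
  filter_upwards [ae_eq_integral_of_variance_eq_zero hdiff hvar] with ω hω
  rw [← hω]
  field_simp
  ring

lemma exists_ae_eq_mul_add_of_pearson_eq_neg_one (hX : AEMeasurable X μ) (hY : AEMeasurable Y μ)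
    (h : pearson μ X Y = -1) :
    ∃ b, Y =ᵐ[μ] fun ω => -(√Var[Y; μ] / √Var[X; μ]) * X ω + b := by
  obtain ⟨b, hb⟩ := exists_ae_eq_mul_add_of_pearson_eq_one hX hY.neg
    (pearson_neg_right.trans (by rw [h, neg_neg]))
  rw [variance_neg] at hb
  refine ⟨-b, ?_⟩
  filter_upwards [hb] with ω hω
  rw [Pi.neg_apply] at hω
  linarith

end Pearson

lemma ae_eq_of_ae_le_of_map_eq {Ω : Type*} [MeasurableSpace Ω] {μ : Measure Ω} [IsFiniteMeasure μ]
    {f g : Ω → ℝ} (hf : AEMeasurable f μ) (hg : AEMeasurable g μ) (hle : f ≤ᵐ[μ] g)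
    (hmap : μ.map f = μ.map g) : f =ᵐ[μ] g := by
  -- Composing with `arctan` makes the expectations finite without losing strict monotonicity.
  have hintegrable {h : Ω → ℝ} (hh : AEMeasurable h μ) :
      Integrable (fun ω => Real.arctan (h ω)) μ := by
    refine Integrable.of_bound (by fun_prop) (Real.pi / 2) (ae_of_all _ fun ω => abs_le.2 ?_)
    exact ⟨(Real.neg_pi_div_two_lt_arctan _).le, (Real.arctan_lt_pi_div_two _).le⟩
  have heq : ∫ ω, Real.arctan (f ω) ∂μ = ∫ ω, Real.arctan (g ω) ∂μ := by
    rw [← integral_map hf (by fun_prop), hmap, integral_map hg (by fun_prop)]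
  have harctan := (integral_eq_iff_of_ae_le (hintegrable hf) (hintegrable hg)
    (hle.mono fun ω h => Real.arctan_strictMono.monotone h)).1 heq
  exact harctan.mono fun ω h => Real.arctan_injective h

section Uniform

instance isProbabilityMeasure_unif01 : IsProbabilityMeasure unif01 := ⟨by simp [unif01]⟩

lemma ae_unif01_mem_Ioo : ∀ᵐ u ∂unif01, u ∈ Ioo (0 : ℝ) 1 := ae_restrict_mem measurableSet_Ioo

lemma unif01_Iic {x : ℝ} (hx : x ≤ 1) : unif01 (Iic x) = ENNReal.ofReal x := by
  rw [unif01, Measure.restrict_congr_set Ioo_ae_eq_Ioc, Measure.restrict_apply measurableSet_Iic,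
    inter_comm, Ioc_inter_Iic, min_eq_right hx, Real.volume_Ioc, sub_zero]

lemma measurePreserving_one_sub_unif01 :
    MeasurePreserving (fun u : ℝ => 1 - u) unif01 unif01 := by
  have h := (Measure.measurePreserving_sub_left (volume : Measure ℝ) 1).restrict_preimage
    (s := Ioo (0 : ℝ) 1) measurableSet_Ioo
  rwa [preimage_const_sub_Ioo, sub_self, sub_zero] at h

end Uniform

section Quantile

open Filter Topology

/-- The quantile function `G⁻¹` of a distribution `G` on `ℝ`. Only its values on `(0, 1)` are
meaningful; elsewhere the infimum may be a junk value. -/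
def quantile (G : Measure ℝ) : ℝ → ℝ := quantileFn (cdfOf G)

variable (G : Measure ℝ) [IsProbabilityMeasure G]

lemma cdfOf_eq_cdf : cdfOf G = cdf G := funext fun x => (cdf_eq_real G x).symm

variable {G} in
lemma quantile_le_iff {p : ℝ} (hp : p ∈ Ioo (0 : ℝ) 1) (x : ℝ) :
    quantile G p ≤ x ↔ p ≤ cdfOf G x := by
  rw [quantile, quantileFn, cdfOf_eq_cdf]
  have hne : {x | p ≤ cdf G x}.Nonempty :=
    ((tendsto_cdf_atTop G).eventually (lt_mem_nhds hp.2)).exists.imp fun _ => le_of_lt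
  have hbdd : BddBelow {x | p ≤ cdf G x} := by
    obtain ⟨y, hy⟩ := ((tendsto_cdf_atBot G).eventually (gt_mem_nhds hp.1)).exists
    exact ⟨y, fun z hz => ((monotone_cdf G).reflect_lt (hy.trans_le hz)).le⟩
  refine ⟨fun h => ?_, fun h => csInf_le hbdd h⟩
  have hright : Tendsto (cdf G) (𝓝[>] x) (𝓝 (cdf G x)) :=
    ((cdf G).right_continuous x).tendsto.mono_left (nhdsWithin_mono _ Ioi_subset_Ici_self)
  refine ge_of_tendsto hright ?_
  filter_upwards [self_mem_nhdsWithin] with y hy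
  obtain ⟨z, hz, hzy⟩ := (csInf_lt_iff hbdd hne).1 (h.trans_lt hy)
  exact hz.trans (monotone_cdf G hzy.le)

lemma monotoneOn_quantile : MonotoneOn (quantile G) (Ioo 0 1) := fun _ hp _ hq hpq =>
  (quantile_le_iff hp _).2 (hpq.trans ((quantile_le_iff hq _).1 le_rfl))

lemma aemeasurable_quantile : AEMeasurable (quantile G) unif01 :=
  aemeasurable_restrict_of_monotoneOn measurableSet_Ioo (monotoneOn_quantile G)

lemma map_quantile : unif01.map (quantile G) = G := by
  have := Measure.isProbabilityMeasure_map (aemeasurable_quantile G)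
  refine Measure.ext_of_Iic _ _ fun x => ?_
  have hpre : quantile G ⁻¹' Iic x =ᵐ[unif01] Iic (cdfOf G x) := by
    filter_upwards [ae_unif01_mem_Ioo] with u hu using propext (quantile_le_iff hu x)
  rw [Measure.map_apply_of_aemeasurable (aemeasurable_quantile G) measurableSet_Iic,
    measure_congr hpre, cdfOf_eq_cdf, unif01_Iic (cdf_le_one G x), ofReal_cdf]

variable {G}

section Comp

variable {Ω : Type*} [MeasurableSpace Ω] {μ : Measure Ω} {U : Ω → ℝ}

lemma aemeasurable_quantile_comp (hU : MeasurePreserving U μ unif01) :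
    AEMeasurable (fun ω => quantile G (U ω)) μ :=
  (aemeasurable_quantile G).comp_quasiMeasurePreserving hU.quasiMeasurePreserving

lemma map_quantile_comp (hU : MeasurePreserving U μ unif01) :
    μ.map (fun ω => quantile G (U ω)) = G := by
  have hq : AEMeasurable (quantile G) (μ.map U) := hU.map_eq ▸ aemeasurable_quantile G
  have hmap := AEMeasurable.map_map_of_aemeasurable hq hU.aemeasurable
  rw [hU.map_eq, map_quantile] at hmap
  exact hmap.symm

lemma map_comp_quantile_comp {T : ℝ → ℝ} (hT : Measurable T) (hU : MeasurePreserving U μ unif01) :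
    μ.map (fun ω => T (quantile G (U ω))) = G.map T := by
  nth_rewrite 2 [← map_quantile_comp (G := G) hU]
  exact (AEMeasurable.map_map_of_aemeasurable hT.aemeasurable (aemeasurable_quantile_comp hU)).symm

lemma variance_quantile_comp (hU : MeasurePreserving U μ unif01) :
    Var[fun ω => quantile G (U ω); μ] = Var[id; G] := by
  rw [← variance_id_map (aemeasurable_quantile_comp hU), map_quantile_comp hU]

lemma memLp_quantile_comp_iff (hU : MeasurePreserving U μ unif01) :
    MemLp (fun ω => quantile G (U ω)) 2 μ ↔ FiniteSecondMoment G := by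
  rw [FiniteSecondMoment, ← memLp_two_iff_integrable_sq (f := fun x => x) aestronglyMeasurable_id]
  nth_rewrite 2 [← map_quantile_comp (G := G) hU]
  exact (memLp_map_measure_iff aestronglyMeasurable_id (aemeasurable_quantile_comp hU)).symm

end Comp

lemma quantile_ae_eq_of_monotoneOn {f : ℝ → ℝ} (hf : MonotoneOn f (Ioo 0 1))
    (hmap : unif01.map f = G) : quantile G =ᵐ[unif01] f := by
  have hfm : AEMeasurable f unif01 := aemeasurable_restrict_of_monotoneOn measurableSet_Ioo hf
  refine ae_eq_of_ae_le_of_map_eq (aemeasurable_quantile G) hfm ?_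
    ((map_quantile G).trans hmap.symm)
  filter_upwards [ae_unif01_mem_Ioo] with u hu
  rw [quantile_le_iff hu, cdfOf, ← hmap, Measure.map_apply_of_aemeasurable hfm measurableSet_Iic,
    ← ENNReal.ofReal_le_iff_le_toReal (measure_ne_top _ _), ← unif01_Iic hu.2.le]
  refine measure_mono_ae ?_
  filter_upwards [ae_unif01_mem_Ioo] with w hw hwu using hf hw hu hwu

lemma quantile_map_of_monotone {T : ℝ → ℝ} (hT : Monotone T) :
    quantile (G.map T) =ᵐ[unif01] fun u => T (quantile G u) :=
  have := Measure.isProbabilityMeasure_map (μ := G) hT.measurable.aemeasurable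
  quantile_ae_eq_of_monotoneOn (hT.comp_monotoneOn (monotoneOn_quantile G))
    (map_comp_quantile_comp hT.measurable (MeasurePreserving.id unif01))

lemma quantile_map_of_antitone {T : ℝ → ℝ} (hT : Antitone T) :
    quantile (G.map T) =ᵐ[unif01] fun u => T (quantile G (1 - u)) := by
  have := Measure.isProbabilityMeasure_map (μ := G) hT.measurable.aemeasurable
  refine quantile_ae_eq_of_monotoneOn (fun u hu v hv huv => hT ?_)
    (map_comp_quantile_comp hT.measurable measurePreserving_one_sub_unif01)
  exact monotoneOn_quantile G (Ioo.one_sub_mem hv) (Ioo.one_sub_mem hu) (by linarith)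

lemma map_const_sub_eq_self_iff {c : ℝ} :
    G.map (fun x => c - x) = G ↔
      (fun u => quantile G (1 - u)) =ᵐ[unif01] fun u => c - quantile G u := by
  constructor <;> intro h
  · have hquantile := quantile_map_of_antitone (G := G) (T := fun x => c - x)
      fun _ _ hxy => sub_le_sub_left hxy c
    rw [h] at hquantile
    filter_upwards [hquantile] with u hu
    rw [hu, sub_sub_cancel]
  · calc G.map (fun x => c - x)
      _ = unif01.map (fun u => c - quantile G u) :=
        (map_comp_quantile_comp (by fun_prop) (MeasurePreserving.id unif01)).symm
      _ = unif01.map (fun u => quantile G (1 - u)) := (Measure.map_congr h).symm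
      _ = G := map_quantile_comp measurePreserving_one_sub_unif01

lemma nondegenerate_iff_variance_ne_zero (hG : FiniteSecondMoment G) :
    Nondegenerate G ↔ Var[id; G] ≠ 0 := by
  have hid : MemLp id 2 G := (memLp_two_iff_integrable_sq aestronglyMeasurable_id).2 hG
  refine ⟨fun h hvar => ?_, fun h c hc => h (by rw [hc, variance_dirac])⟩
  apply h (∫ x, x ∂G)
  calc G
    _ = G.map id := Measure.map_id.symm
    _ = G.map (fun _ => ∫ x, x ∂G) :=
      Measure.map_congr (ae_eq_integral_of_variance_eq_zero hid hvar)
    _ = Measure.dirac (∫ x, x ∂G) := by rw [Measure.map_const, measure_univ, one_smul]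

end Quantile

section Hoeffding

/-- The signed indicator of the interval between `0` and `x`, for which `x = ∫ s, signedStep x s`.
The intervals are closed on the left so that `signedStep x s` depends on `x` only through the event
`x ≤ s` that defines distribution functions. -/
def signedStep (x s : ℝ) : ℝ := (Ico 0 x).indicator 1 s - (Ico x 0).indicator 1 s

lemma signedStep_eq (x s : ℝ) :
    signedStep x s = (Ici 0).indicator 1 s - (Iic s).indicator 1 x := by
  simp only [signedStep, indicator, mem_Ico, mem_Ici, mem_Iic, Pi.one_apply]
  grind

lemma measurable_signedStep : Measurable (fun p : ℝ × ℝ => signedStep p.1 p.2) := by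
  have hle : (fun p : ℝ × ℝ => (Iic p.2).indicator (1 : ℝ → ℝ) p.1) =
      {p : ℝ × ℝ | p.1 ≤ p.2}.indicator 1 := rfl
  simp only [signedStep_eq]
  refine ((measurable_one.indicator measurableSet_Ici).comp measurable_snd).sub ?_
  rw [hle]
  exact measurable_one.indicator (measurableSet_le measurable_fst measurable_snd)

lemma integrable_indicator_Ico (a b : ℝ) : Integrable ((Ico a b).indicator (1 : ℝ → ℝ)) :=
  (integrable_indicator_iff measurableSet_Ico).2 (integrableOn_const (by simp))

lemma integrable_signedStep (x : ℝ) : Integrable (signedStep x) :=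
  (integrable_indicator_Ico 0 x).sub (integrable_indicator_Ico x 0)

lemma integral_signedStep (x : ℝ) : ∫ s, signedStep x s = x := by
  simp only [signedStep]
  rw [integral_sub (integrable_indicator_Ico 0 x) (integrable_indicator_Ico x 0),
    integral_indicator_one measurableSet_Ico, integral_indicator_one measurableSet_Ico,
    Real.volume_real_Ico, Real.volume_real_Ico, sub_zero, zero_sub,
    max_zero_sub_max_neg_zero_eq_self]

lemma abs_signedStep (x s : ℝ) :
    |signedStep x s| = (Ico 0 x).indicator 1 s + (Ico x 0).indicator 1 s := by
  simp only [signedStep, indicator, mem_Ico, Pi.one_apply]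
  grind

lemma integral_abs_signedStep (x : ℝ) : ∫ s, |signedStep x s| = |x| := by
  simp only [abs_signedStep]
  rw [integral_add (integrable_indicator_Ico 0 x) (integrable_indicator_Ico x 0),
    integral_indicator_one measurableSet_Ico, integral_indicator_one measurableSet_Ico,
    Real.volume_real_Ico, Real.volume_real_Ico, sub_zero, zero_sub,
    max_zero_add_max_neg_zero_eq_abs_self]

variable {P Q : Measure (ℝ × ℝ)}

/-- The expectation of `signedStep X s * signedStep Y t` at `z = (s, t)` for `(X, Y) ~ P`: the
integrand of the layer-cake representation of `E[X Y]`. -/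
def stepMoment (P : Measure (ℝ × ℝ)) (z : ℝ × ℝ) : ℝ :=
  ∫ p, signedStep p.1 z.1 * signedStep p.2 z.2 ∂P

lemma integrable_signedStep_mul (hP : Integrable (fun p : ℝ × ℝ => p.1 * p.2) P) :
    Integrable (fun w : (ℝ × ℝ) × (ℝ × ℝ) => signedStep w.1.1 w.2.1 * signedStep w.1.2 w.2.2)
      (P.prod volume) := by
  have hfst : Measurable (fun w : (ℝ × ℝ) × (ℝ × ℝ) => signedStep w.1.1 w.2.1) :=
    measurable_signedStep.comp (f := fun w : (ℝ × ℝ) × (ℝ × ℝ) => (w.1.1, w.2.1)) (by fun_prop)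
  have hsnd : Measurable (fun w : (ℝ × ℝ) × (ℝ × ℝ) => signedStep w.1.2 w.2.2) :=
    measurable_signedStep.comp (f := fun w : (ℝ × ℝ) × (ℝ × ℝ) => (w.1.2, w.2.2)) (by fun_prop)
  rw [integrable_prod_iff (hfst.fun_mul hsnd).aestronglyMeasurable]
  refine ⟨ae_of_all _ fun p => (integrable_signedStep p.1).mul_prod (integrable_signedStep p.2),
    hP.norm.congr (ae_of_all _ fun p => ?_)⟩
  simp only [norm_mul, Real.norm_eq_abs]
  rw [Measure.volume_eq_prod,
    integral_prod_mul (fun s => |signedStep p.1 s|) (fun t => |signedStep p.2 t|),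
    integral_abs_signedStep, integral_abs_signedStep]

variable [IsFiniteMeasure P] [IsFiniteMeasure Q]

lemma integrable_stepMoment (hP : Integrable (fun p : ℝ × ℝ => p.1 * p.2) P) :
    Integrable (stepMoment P) :=
  (integrable_signedStep_mul hP).integral_prod_right

lemma integral_stepMoment (hP : Integrable (fun p : ℝ × ℝ => p.1 * p.2) P) :
    ∫ z, stepMoment P z = ∫ p, p.1 * p.2 ∂P := by
  calc ∫ z, stepMoment P z
    _ = ∫ p, (∫ z : ℝ × ℝ, signedStep p.1 z.1 * signedStep p.2 z.2) ∂P :=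
      (integral_integral_swap (f := fun p z : ℝ × ℝ => signedStep p.1 z.1 * signedStep p.2 z.2)
        (integrable_signedStep_mul hP)).symm
    _ = ∫ p, p.1 * p.2 ∂P := by
      simp only [Measure.volume_eq_prod, integral_prod_mul, integral_signedStep]

lemma signedStep_mul_signedStep (x y s t : ℝ) :
    signedStep x s * signedStep y t = (Iic s ×ˢ Iic t).indicator 1 (x, y)
      - (Ici 0).indicator 1 t * (Iic s).indicator 1 x + (Ici 0).indicator 1 s * signedStep y t := by
  have hprod : (Iic s ×ˢ Iic t).indicator (1 : ℝ × ℝ → ℝ) (x, y) =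
      (Iic s).indicator 1 x * (Iic t).indicator 1 y := by
    simp only [indicator, mem_prod, Pi.one_apply, ite_and]
    grind
  rw [hprod, signedStep_eq, signedStep_eq]
  ring

lemma stepMoment_eq (z : ℝ × ℝ) :
    stepMoment P z = cdf2 P z.1 z.2
      - (∫ x, (Ici 0).indicator 1 z.2 * (Iic z.1).indicator 1 x ∂P.fst)
      + ∫ y, (Ici 0).indicator 1 z.1 * signedStep y z.2 ∂P.snd := by
  have hbox : MeasurableSet (Iic z.1 ×ˢ Iic z.2) := measurableSet_Iic.prod measurableSet_Iic
  have hintBox : Integrable ((Iic z.1 ×ˢ Iic z.2).indicator (1 : ℝ × ℝ → ℝ)) P :=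
    (integrable_const 1).indicator hbox
  have hintFst : Integrable (fun x => (Ici 0).indicator 1 z.2 * (Iic z.1).indicator 1 x) P.fst :=
    ((integrable_const (1 : ℝ)).indicator measurableSet_Iic).const_mul _
  have hintSnd : Integrable (fun y => (Ici 0).indicator 1 z.1 * signedStep y z.2) P.snd := by
    simp only [signedStep_eq]
    exact ((integrable_const _).sub
      ((integrable_const (1 : ℝ)).indicator measurableSet_Iic)).const_mul _
  have hcdf : ∫ p, (Iic z.1 ×ˢ Iic z.2).indicator 1 p ∂P = cdf2 P z.1 z.2 :=
    integral_indicator_one hbox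
  simp only [stepMoment, signedStep_mul_signedStep]
  rw [← hcdf, Measure.fst, integral_map measurable_fst.aemeasurable hintFst.1, Measure.snd,
    integral_map measurable_snd.aemeasurable hintSnd.1]
  have hintFstP := hintFst.comp_measurable measurable_fst
  exact (integral_add (hintBox.sub hintFstP) (hintSnd.comp_measurable measurable_snd)).trans
    (congrArg (· + _) (integral_sub hintBox hintFstP))

lemma stepMoment_sub_stepMoment (hfst : P.fst = Q.fst) (hsnd : P.snd = Q.snd) (z : ℝ × ℝ) :
    stepMoment Q z - stepMoment P z = cdf2 Q z.1 z.2 - cdf2 P z.1 z.2 := by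
  rw [stepMoment_eq, stepMoment_eq, hfst, hsnd]
  ring

lemma integrable_cdf2_sub (hfst : P.fst = Q.fst) (hsnd : P.snd = Q.snd)
    (hP : Integrable (fun p : ℝ × ℝ => p.1 * p.2) P)
    (hQ : Integrable (fun p : ℝ × ℝ => p.1 * p.2) Q) :
    Integrable (fun z : ℝ × ℝ => cdf2 Q z.1 z.2 - cdf2 P z.1 z.2) := by
  simp only [← stepMoment_sub_stepMoment hfst hsnd]
  exact (integrable_stepMoment hQ).sub (integrable_stepMoment hP)

lemma integral_cdf2_sub (hfst : P.fst = Q.fst) (hsnd : P.snd = Q.snd)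
    (hP : Integrable (fun p : ℝ × ℝ => p.1 * p.2) P)
    (hQ : Integrable (fun p : ℝ × ℝ => p.1 * p.2) Q) :
    ∫ z : ℝ × ℝ, (cdf2 Q z.1 z.2 - cdf2 P z.1 z.2) = ∫ p, p.1 * p.2 ∂Q - ∫ p, p.1 * p.2 ∂P := by
  simp only [← stepMoment_sub_stepMoment hfst hsnd]
  rw [integral_sub (integrable_stepMoment hQ) (integrable_stepMoment hP), integral_stepMoment hQ,
    integral_stepMoment hP]

lemma pearson_fst_snd (P : Measure (ℝ × ℝ)) :
    pearson P Prod.fst Prod.snd = (∫ p, p.1 * p.2 ∂P - (∫ x, x ∂P.fst) * ∫ y, y ∂P.snd) /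
      √(Var[id; P.fst] * Var[id; P.snd]) := by
  rw [Measure.fst, Measure.snd, variance_id_map measurable_fst.aemeasurable,
    variance_id_map measurable_snd.aemeasurable,
    integral_map (f := fun x : ℝ => x) measurable_fst.aemeasurable aestronglyMeasurable_id,
    integral_map (f := fun x : ℝ => x) measurable_snd.aemeasurable aestronglyMeasurable_id]
  rfl

lemma pearson_fst_snd_sub (hfst : P.fst = Q.fst) (hsnd : P.snd = Q.snd)
    (hP : Integrable (fun p : ℝ × ℝ => p.1 * p.2) P)
    (hQ : Integrable (fun p : ℝ × ℝ => p.1 * p.2) Q) :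
    pearson Q Prod.fst Prod.snd - pearson P Prod.fst Prod.snd =
      (∫ z : ℝ × ℝ, (cdf2 Q z.1 z.2 - cdf2 P z.1 z.2)) / √(Var[id; P.fst] * Var[id; P.snd]) := by
  rw [pearson_fst_snd, pearson_fst_snd, ← hfst, ← hsnd, ← sub_div, sub_sub_sub_cancel_right,
    integral_cdf2_sub hfst hsnd hP hQ]

end Hoeffding

section Copula

variable {C : Measure (ℝ × ℝ)}

lemma isCopula_map_prodMk {Ω : Type*} [MeasurableSpace Ω] {μ : Measure Ω} [IsProbabilityMeasure μ]
    {U V : Ω → ℝ} (hU : MeasurePreserving U μ unif01) (hV : MeasurePreserving V μ unif01) :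
    IsCopula (μ.map fun ω => (U ω, V ω)) where
  prob := Measure.isProbabilityMeasure_map (hU.measurable.prodMk hV.measurable).aemeasurable
  fst_marginal := (Measure.fst_map_prodMk hV.measurable).trans hU.map_eq
  snd_marginal := (Measure.snd_map_prodMk hU.measurable).trans hV.map_eq

lemma isCopula_comonCopula : IsCopula comonCopula :=
  isCopula_map_prodMk (MeasurePreserving.id unif01) (MeasurePreserving.id unif01)

lemma isCopula_counterCopula : IsCopula counterCopula :=
  isCopula_map_prodMk (MeasurePreserving.id unif01) measurePreserving_one_sub_unif01

lemma isCopula_indepCopula : IsCopula indepCopula where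
  prob := inferInstanceAs (IsProbabilityMeasure (unif01.prod unif01))
  fst_marginal := measurePreserving_fst.map_eq
  snd_marginal := measurePreserving_snd.map_eq

lemma map_one_sub_comonCopula :
    comonCopula.map (fun p => (p.1, 1 - p.2)) = counterCopula :=
  Measure.map_map (by fun_prop) (by fun_prop)

namespace IsCopula

lemma measurePreserving_fst (hC : IsCopula C) : MeasurePreserving Prod.fst C unif01 :=
  ⟨_root_.measurable_fst, hC.fst_marginal⟩

lemma measurePreserving_snd (hC : IsCopula C) : MeasurePreserving Prod.snd C unif01 :=
  ⟨_root_.measurable_snd, hC.snd_marginal⟩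

lemma measurePreserving_one_sub_snd (hC : IsCopula C) :
    MeasurePreserving (fun p => 1 - p.2) C unif01 :=
  measurePreserving_one_sub_unif01.comp hC.measurePreserving_snd

lemma map_swap (hC : IsCopula C) : IsCopula (C.map Prod.swap) :=
  have := hC.prob
  isCopula_map_prodMk hC.measurePreserving_snd hC.measurePreserving_fst

lemma map_one_sub_snd (hC : IsCopula C) : IsCopula (C.map fun p => (p.1, 1 - p.2)) :=
  have := hC.prob
  isCopula_map_prodMk hC.measurePreserving_fst hC.measurePreserving_one_sub_snd

lemma cdf2_le_unif01_Iic_min (hC : IsCopula C) (u v : ℝ) :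
    cdf2 C u v ≤ unif01.real (Iic (min u v)) := by
  have := hC.prob
  rcases min_choice u v with h | h <;> rw [h]
  · rw [← hC.measurePreserving_fst.measureReal_preimage measurableSet_Iic.nullMeasurableSet]
    exact measureReal_mono fun p hp => hp.1
  · rw [← hC.measurePreserving_snd.measureReal_preimage measurableSet_Iic.nullMeasurableSet]
    exact measureReal_mono fun p hp => hp.2

lemma cdf2_le_cdf2_comonCopula (hC : IsCopula C) (u v : ℝ) :
    cdf2 C u v ≤ cdf2 comonCopula u v := by
  have hpre : (fun w : ℝ => (w, w)) ⁻¹' (Iic u ×ˢ Iic v) = Iic (min u v) := by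
    ext w
    simp
  have hcomon : cdf2 comonCopula u v = unif01.real (Iic (min u v)) := by
    rw [← hpre]
    exact map_measureReal_apply (by fun_prop) (measurableSet_Iic.prod measurableSet_Iic)
  exact (hC.cdf2_le_unif01_Iic_min u v).trans_eq hcomon.symm

lemma real_union_add_cdf2 (hC : IsCopula C) (u v : ℝ) :
    C.real (Prod.fst ⁻¹' Iic u ∪ Prod.snd ⁻¹' Iic v) + cdf2 C u v =
      unif01.real (Iic u) + unif01.real (Iic v) := by
  have := hC.prob
  rw [← hC.measurePreserving_fst.measureReal_preimage measurableSet_Iic.nullMeasurableSet,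
    ← hC.measurePreserving_snd.measureReal_preimage measurableSet_Iic.nullMeasurableSet]
  exact measureReal_union_add_inter (measurable_snd measurableSet_Iic)

lemma cdf2_counterCopula_le_cdf2 (hC : IsCopula C) (u v : ℝ) :
    cdf2 counterCopula u v ≤ cdf2 C u v := by
  have := hC.prob
  rcases lt_or_ge u (1 - v) with huv | huv
  · have hpre : (fun w : ℝ => (w, 1 - w)) ⁻¹' (Iic u ×ˢ Iic v) = ∅ :=
      eq_empty_of_forall_notMem fun w ⟨hwu, hwv⟩ => by
        simp only [mem_Iic] at hwu hwv
        linarith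
    have hzero : cdf2 counterCopula u v = unif01.real ∅ := by
      rw [← hpre]
      exact map_measureReal_apply (by fun_prop) (measurableSet_Iic.prod measurableSet_Iic)
    rw [hzero, measureReal_empty]
    exact measureReal_nonneg
  · have hpre : (fun w : ℝ => (w, 1 - w)) ⁻¹' (Prod.fst ⁻¹' Iic u ∪ Prod.snd ⁻¹' Iic v) = univ := by
      refine eq_univ_of_forall fun w => ?_
      rcases le_total w u with hw | hw
      · exact Or.inl hw
      · exact Or.inr (show 1 - w ≤ v by linarith)
    have hone : counterCopula.real (Prod.fst ⁻¹' Iic u ∪ Prod.snd ⁻¹' Iic v) = 1 := by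
      rw [counterCopula, map_measureReal_apply (by fun_prop)
        ((measurable_fst measurableSet_Iic).union (measurable_snd measurableSet_Iic)), hpre,
        probReal_univ]
    have hle : C.real (Prod.fst ⁻¹' Iic u ∪ Prod.snd ⁻¹' Iic v) ≤ 1 := measureReal_le_one
    linarith [hC.real_union_add_cdf2 u v, isCopula_counterCopula.real_union_add_cdf2 u v]

end IsCopula

lemma IsConcordanceMeasure.congr {κ κ' : Measure (ℝ × ℝ) → ℝ} (hκ : IsConcordanceMeasure κ)
    (h : ∀ C, IsCopula C → κ' C = κ C) : IsConcordanceMeasure κ' where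
  symmetry C hC := by
    rw [h C hC, h _ hC.map_swap, hκ.symmetry C hC]
  coherence C D hC hD hCD := by
    rw [h C hC, h D hD]
    exact hκ.coherence C D hC hD hCD
  range C hC := h C hC ▸ hκ.range C hC
  comonotone_val := (h _ isCopula_comonCopula).trans hκ.comonotone_val
  countermonotone_val := (h _ isCopula_counterCopula).trans hκ.countermonotone_val
  independence := (h _ isCopula_indepCopula).trans hκ.independence
  change_sign C hC := by
    rw [h C hC, h _ hC.map_one_sub_snd, hκ.change_sign C hC]
  continuity Cs C hCs hC hlim := by
    simp only [h C hC, fun n => h (Cs n) (hCs n)]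
    exact hκ.continuity Cs C hCs hC hlim

end Copula

section TransformedRankCorr

open Filter Topology

/-- The joint law of `(G₁⁻¹(U₁), G₂⁻¹(U₂))` for `(U₁, U₂) ~ C`. -/
def quantileLaw (G₁ G₂ : Measure ℝ) (C : Measure (ℝ × ℝ)) : Measure (ℝ × ℝ) :=
  C.map fun p => (quantile G₁ p.1, quantile G₂ p.2)

/-- The transformed rank correlation coefficient `κ_{G₁, G₂}` as a functional on copulas: for
continuous margins, `(F₁(X₁), F₂(X₂))` is distributed according to the copula of `(X₁, X₂)`. -/
def transformedRankCorr (G₁ G₂ : Measure ℝ) (C : Measure (ℝ × ℝ)) : ℝ :=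
  pearson C (fun p => quantile G₁ p.1) (fun p => quantile G₂ p.2)

lemma transformedRankCorr_indepCopula (G₁ G₂ : Measure ℝ) :
    transformedRankCorr G₁ G₂ indepCopula = 0 :=
  pearson_prod (quantile G₁) (quantile G₂)

variable {G₁ G₂ : Measure ℝ} [IsProbabilityMeasure G₁] [IsProbabilityMeasure G₂]
  {C D : Measure (ℝ × ℝ)}

namespace IsCopula

lemma aemeasurable_quantile_fst (hC : IsCopula C) : AEMeasurable (fun p => quantile G₁ p.1) C :=
  aemeasurable_quantile_comp hC.measurePreserving_fst

lemma aemeasurable_quantile_snd (hC : IsCopula C) : AEMeasurable (fun p => quantile G₂ p.2) C :=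
  aemeasurable_quantile_comp hC.measurePreserving_snd

lemma aemeasurable_quantile_prodMk (hC : IsCopula C) :
    AEMeasurable (fun p => (quantile G₁ p.1, quantile G₂ p.2)) C :=
  hC.aemeasurable_quantile_fst.prodMk hC.aemeasurable_quantile_snd

lemma isProbabilityMeasure_quantileLaw (hC : IsCopula C) :
    IsProbabilityMeasure (quantileLaw G₁ G₂ C) :=
  have := hC.prob
  Measure.isProbabilityMeasure_map hC.aemeasurable_quantile_prodMk

lemma fst_quantileLaw (hC : IsCopula C) : (quantileLaw G₁ G₂ C).fst = G₁ :=
  (Measure.fst_map_prodMk₀ hC.aemeasurable_quantile_snd).trans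
    (map_quantile_comp hC.measurePreserving_fst)

lemma snd_quantileLaw (hC : IsCopula C) : (quantileLaw G₁ G₂ C).snd = G₂ :=
  (Measure.snd_map_prodMk₀ hC.aemeasurable_quantile_fst).trans
    (map_quantile_comp hC.measurePreserving_snd)

lemma cdf2_quantileLaw (hC : IsCopula C) (s t : ℝ) :
    cdf2 (quantileLaw G₁ G₂ C) s t = cdf2 C (cdfOf G₁ s) (cdfOf G₂ t) := by
  have hpre : (fun p : ℝ × ℝ => (quantile G₁ p.1, quantile G₂ p.2)) ⁻¹' (Iic s ×ˢ Iic t) =ᵐ[C]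
      Iic (cdfOf G₁ s) ×ˢ Iic (cdfOf G₂ t) := by
    filter_upwards [hC.measurePreserving_fst.quasiMeasurePreserving.ae ae_unif01_mem_Ioo,
      hC.measurePreserving_snd.quasiMeasurePreserving.ae ae_unif01_mem_Ioo] with p hp₁ hp₂
    exact propext (and_congr (quantile_le_iff hp₁ s) (quantile_le_iff hp₂ t))
  rw [cdf2, quantileLaw, Measure.map_apply_of_aemeasurable hC.aemeasurable_quantile_prodMk
    (measurableSet_Iic.prod measurableSet_Iic), measure_congr hpre, cdf2]

lemma transformedRankCorr_eq_pearson_quantileLaw (hC : IsCopula C) :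
    transformedRankCorr G₁ G₂ C = pearson (quantileLaw G₁ G₂ C) Prod.fst Prod.snd :=
  (pearson_map hC.aemeasurable_quantile_prodMk measurable_fst.aemeasurable
    measurable_snd.aemeasurable).symm

end IsCopula

lemma transformedRankCorr_map_prodMk {Ω : Type*} [MeasurableSpace Ω] {μ : Measure Ω}
    [IsProbabilityMeasure μ] {U V : Ω → ℝ} (hU : MeasurePreserving U μ unif01)
    (hV : MeasurePreserving V μ unif01) :
    transformedRankCorr G₁ G₂ (μ.map fun ω => (U ω, V ω)) =
      pearson μ (fun ω => quantile G₁ (U ω)) (fun ω => quantile G₂ (V ω)) :=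
  have hUV := isCopula_map_prodMk hU hV
  pearson_map (hU.measurable.prodMk hV.measurable).aemeasurable hUV.aemeasurable_quantile_fst
    hUV.aemeasurable_quantile_snd

lemma transformedRankCorr_map_swap (hC : IsCopula C) :
    transformedRankCorr G₁ G₂ (C.map Prod.swap) = transformedRankCorr G₂ G₁ C :=
  have := hC.prob
  (transformedRankCorr_map_prodMk hC.measurePreserving_snd hC.measurePreserving_fst).trans
    pearson_comm

lemma transformedRankCorr_self_comonCopula (hG₁ : FiniteSecondMoment G₁)
    (hnondeg : Nondegenerate G₁) : transformedRankCorr G₁ G₁ comonCopula = 1 := by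
  have hid := MeasurePreserving.id unif01
  refine (transformedRankCorr_map_prodMk hid hid).trans
    (pearson_self ((memLp_quantile_comp_iff hid).2 hG₁) ?_)
  rw [variance_quantile_comp hid]
  exact (nondegenerate_iff_variance_ne_zero hG₁).1 hnondeg

lemma transformedRankCorr_map_one_sub_snd (hG₁ : FiniteSecondMoment G₁)
    (hG₂ : FiniteSecondMoment G₂) (hsymm : SymmetricDist G₂) (hC : IsCopula C) :
    transformedRankCorr G₁ G₂ (C.map fun p => (p.1, 1 - p.2)) = -transformedRankCorr G₁ G₂ C := by
  have := hC.prob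
  obtain ⟨m, hm⟩ := hsymm
  have hreflect : (fun p : ℝ × ℝ => quantile G₂ (1 - p.2)) =ᵐ[C]
      fun p => 2 * m - quantile G₂ p.2 :=
    hC.measurePreserving_snd.quasiMeasurePreserving.ae (map_const_sub_eq_self_iff.1 hm)
  calc transformedRankCorr G₁ G₂ (C.map fun p => (p.1, 1 - p.2))
    _ = pearson C (fun p => quantile G₁ p.1) (fun p => quantile G₂ (1 - p.2)) :=
      transformedRankCorr_map_prodMk hC.measurePreserving_fst hC.measurePreserving_one_sub_snd
    _ = pearson C (fun p => quantile G₁ p.1) (fun p => 2 * m - quantile G₂ p.2) :=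
      pearson_congr_ae .rfl hreflect
    _ = -transformedRankCorr G₁ G₂ C :=
      pearson_const_sub_right _ ((memLp_quantile_comp_iff hC.measurePreserving_fst).2 hG₁)
        ((memLp_quantile_comp_iff hC.measurePreserving_snd).2 hG₂)

lemma transformedRankCorr_mem_Icc (hG₁ : FiniteSecondMoment G₁) (hG₂ : FiniteSecondMoment G₂)
    (hC : IsCopula C) : transformedRankCorr G₁ G₂ C ∈ Icc (-1 : ℝ) 1 :=
  have := hC.prob
  pearson_mem_Icc ((memLp_quantile_comp_iff hC.measurePreserving_fst).2 hG₁)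
    ((memLp_quantile_comp_iff hC.measurePreserving_snd).2 hG₂)

lemma transformedRankCorr_congr_of_sameType {H₁ H₂ : Measure ℝ} (hH₁ : SameType H₁ G₁)
    (hH₂ : SameType H₂ G₂) (hG₁ : FiniteSecondMoment G₁) (hG₂ : FiniteSecondMoment G₂)
    (hC : IsCopula C) : transformedRankCorr H₁ H₂ C = transformedRankCorr G₁ G₂ C := by
  have := hC.prob
  obtain ⟨a, b, ha, rfl⟩ := hH₁
  obtain ⟨c, d, hc, rfl⟩ := hH₂
  have hmono {a b : ℝ} (ha : 0 < a) : Monotone fun x => a * x + b :=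
    fun _ _ hxy => add_le_add_left (mul_le_mul_of_nonneg_left hxy ha.le) b
  have hfst := hC.measurePreserving_fst
  have hsnd := hC.measurePreserving_snd
  have hquantile₁ := hfst.quasiMeasurePreserving.ae_eq_comp
    (quantile_map_of_monotone (G := G₁) (hmono (b := b) ha))
  have hquantile₂ := hsnd.quasiMeasurePreserving.ae_eq_comp
    (quantile_map_of_monotone (G := G₂) (hmono (b := d) hc))
  exact (pearson_congr_ae hquantile₁ hquantile₂).trans <|
    pearson_mul_add ha hc ((memLp_quantile_comp_iff hfst).2 hG₁)
      ((memLp_quantile_comp_iff hsnd).2 hG₂)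

lemma integrable_mul_quantileLaw (hG₁ : FiniteSecondMoment G₁) (hG₂ : FiniteSecondMoment G₂)
    (hC : IsCopula C) : Integrable (fun p : ℝ × ℝ => p.1 * p.2) (quantileLaw G₁ G₂ C) := by
  refine (integrable_map_measure (by fun_prop) hC.aemeasurable_quantile_prodMk).2 ?_
  exact ((memLp_quantile_comp_iff hC.measurePreserving_fst).2 hG₁).integrable_mul
    ((memLp_quantile_comp_iff hC.measurePreserving_snd).2 hG₂)

lemma integrable_cdf2_quantileLaw_sub (hG₁ : FiniteSecondMoment G₁) (hG₂ : FiniteSecondMoment G₂)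
    (hC : IsCopula C) (hD : IsCopula D) :
    Integrable fun z : ℝ × ℝ =>
      cdf2 (quantileLaw G₁ G₂ D) z.1 z.2 - cdf2 (quantileLaw G₁ G₂ C) z.1 z.2 := by
  have := hC.isProbabilityMeasure_quantileLaw (G₁ := G₁) (G₂ := G₂)
  have := hD.isProbabilityMeasure_quantileLaw (G₁ := G₁) (G₂ := G₂)
  exact integrable_cdf2_sub (hC.fst_quantileLaw.trans hD.fst_quantileLaw.symm)
    (hC.snd_quantileLaw.trans hD.snd_quantileLaw.symm) (integrable_mul_quantileLaw hG₁ hG₂ hC)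
    (integrable_mul_quantileLaw hG₁ hG₂ hD)

lemma transformedRankCorr_sub (hG₁ : FiniteSecondMoment G₁) (hG₂ : FiniteSecondMoment G₂)
    (hC : IsCopula C) (hD : IsCopula D) :
    transformedRankCorr G₁ G₂ D - transformedRankCorr G₁ G₂ C =
      (∫ z : ℝ × ℝ, (cdf2 (quantileLaw G₁ G₂ D) z.1 z.2 - cdf2 (quantileLaw G₁ G₂ C) z.1 z.2)) /
        √(Var[id; G₁] * Var[id; G₂]) := by
  have := hC.isProbabilityMeasure_quantileLaw (G₁ := G₁) (G₂ := G₂)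
  have := hD.isProbabilityMeasure_quantileLaw (G₁ := G₁) (G₂ := G₂)
  rw [hC.transformedRankCorr_eq_pearson_quantileLaw, hD.transformedRankCorr_eq_pearson_quantileLaw,
    pearson_fst_snd_sub (hC.fst_quantileLaw.trans hD.fst_quantileLaw.symm)
      (hC.snd_quantileLaw.trans hD.snd_quantileLaw.symm) (integrable_mul_quantileLaw hG₁ hG₂ hC)
      (integrable_mul_quantileLaw hG₁ hG₂ hD), hC.fst_quantileLaw, hC.snd_quantileLaw]

lemma transformedRankCorr_mono (hG₁ : FiniteSecondMoment G₁) (hG₂ : FiniteSecondMoment G₂)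
    (hC : IsCopula C) (hD : IsCopula D) (hCD : ∀ u v, cdf2 C u v ≤ cdf2 D u v) :
    transformedRankCorr G₁ G₂ C ≤ transformedRankCorr G₁ G₂ D := by
  rw [← sub_nonneg, transformedRankCorr_sub hG₁ hG₂ hC hD]
  refine div_nonneg (integral_nonneg fun z => sub_nonneg.2 ?_) (Real.sqrt_nonneg _)
  rw [hC.cdf2_quantileLaw, hD.cdf2_quantileLaw]
  exact hCD _ _

lemma tendsto_transformedRankCorr (hG₁ : FiniteSecondMoment G₁) (hG₂ : FiniteSecondMoment G₂)
    {Cs : ℕ → Measure (ℝ × ℝ)} (hCs : ∀ n, IsCopula (Cs n)) (hC : IsCopula C)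
    (h : ∀ u v, Tendsto (fun n => cdf2 (Cs n) u v) atTop (𝓝 (cdf2 C u v))) :
    Tendsto (fun n => transformedRankCorr G₁ G₂ (Cs n)) atTop
      (𝓝 (transformedRankCorr G₁ G₂ C)) := by
  -- The Fréchet bounds `W ≤ Cₙ ≤ M` dominate the differences to the countermonotone copula `W`.
  have hM := isCopula_comonCopula
  have hW := isCopula_counterCopula
  suffices hsub : Tendsto
      (fun n => transformedRankCorr G₁ G₂ (Cs n) - transformedRankCorr G₁ G₂ counterCopula) atTop
      (𝓝 (transformedRankCorr G₁ G₂ C - transformedRankCorr G₁ G₂ counterCopula)) by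
    simpa only [sub_add_cancel] using
      hsub.add_const (transformedRankCorr G₁ G₂ counterCopula)
  simp only [transformedRankCorr_sub hG₁ hG₂ hW hC,
    fun n => transformedRankCorr_sub hG₁ hG₂ hW (hCs n)]
  refine (tendsto_integral_of_dominated_convergence _
    (fun n => (integrable_cdf2_quantileLaw_sub hG₁ hG₂ hW (hCs n)).aestronglyMeasurable)
    (integrable_cdf2_quantileLaw_sub hG₁ hG₂ hW hM)
    (fun n => ae_of_all _ fun z => ?_) (ae_of_all _ fun z => ?_)).div_const _
  · simp only [(hCs n).cdf2_quantileLaw, hW.cdf2_quantileLaw, hM.cdf2_quantileLaw]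
    rw [Real.norm_of_nonneg (sub_nonneg.2 ((hCs n).cdf2_counterCopula_le_cdf2 _ _))]
    exact sub_le_sub_right ((hCs n).cdf2_le_cdf2_comonCopula _ _) _
  · simp only [(hCs _).cdf2_quantileLaw, hC.cdf2_quantileLaw]
    exact (h _ _).sub_const _

lemma isConcordanceMeasure_transformedRankCorr_self (hnondeg : Nondegenerate G₁)
    (hsymm : SymmetricDist G₁) (hG₁ : FiniteSecondMoment G₁) :
    IsConcordanceMeasure (transformedRankCorr G₁ G₁) where
  symmetry _ hC := transformedRankCorr_map_swap hC
  coherence _ _ hC hD := transformedRankCorr_mono hG₁ hG₁ hC hD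
  range _ hC := transformedRankCorr_mem_Icc hG₁ hG₁ hC
  comonotone_val := transformedRankCorr_self_comonCopula hG₁ hnondeg
  countermonotone_val := by
    rw [← map_one_sub_comonCopula,
      transformedRankCorr_map_one_sub_snd hG₁ hG₁ hsymm isCopula_comonCopula,
      transformedRankCorr_self_comonCopula hG₁ hnondeg]
  independence := transformedRankCorr_indepCopula G₁ G₁
  change_sign _ hC := transformedRankCorr_map_one_sub_snd hG₁ hG₁ hsymm hC
  continuity _ _ hCs hC h := tendsto_transformedRankCorr hG₁ hG₁ hCs hC h

lemma finiteSecondMoment_and_nondegenerate_of_transformedRankCorr_ne_zero (hC : IsCopula C)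
    (h : transformedRankCorr G₁ G₂ C ≠ 0) :
    (FiniteSecondMoment G₁ ∧ Nondegenerate G₁) ∧ FiniteSecondMoment G₂ ∧ Nondegenerate G₂ := by
  have := hC.prob
  have hfinite {G : Measure ℝ} [IsProbabilityMeasure G] {U : ℝ × ℝ → ℝ}
      (hU : MeasurePreserving U C unif01) (hvar : Var[fun p => quantile G (U p); C] ≠ 0) :
      FiniteSecondMoment G ∧ Nondegenerate G := by
    have hG := (memLp_quantile_comp_iff hU).1 (memLp_two_of_variance_ne_zero
      (aemeasurable_quantile_comp hU).aestronglyMeasurable hvar)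
    rw [variance_quantile_comp hU] at hvar
    exact ⟨hG, (nondegenerate_iff_variance_ne_zero hG).2 hvar⟩
  obtain ⟨hvar₁, hvar₂⟩ := variance_ne_zero_of_pearson_ne_zero h
  exact ⟨hfinite hC.measurePreserving_fst hvar₁, hfinite hC.measurePreserving_snd hvar₂⟩

lemma exists_quantile_ae_eq_of_transformedRankCorr_comonCopula_eq_one
    (h : transformedRankCorr G₁ G₂ comonCopula = 1) :
    ∃ b, quantile G₂ =ᵐ[unif01] fun u => √Var[id; G₂] / √Var[id; G₁] * quantile G₁ u + b := by
  have hid := MeasurePreserving.id unif01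
  rw [← variance_quantile_comp (G := G₁) hid, ← variance_quantile_comp (G := G₂) hid]
  exact exists_ae_eq_mul_add_of_pearson_eq_one (aemeasurable_quantile G₁) (aemeasurable_quantile G₂)
    ((transformedRankCorr_map_prodMk hid hid).symm.trans h)

lemma exists_quantile_one_sub_ae_eq_of_transformedRankCorr_counterCopula_eq_neg_one
    (h : transformedRankCorr G₁ G₂ counterCopula = -1) :
    ∃ b, (fun u => quantile G₂ (1 - u)) =ᵐ[unif01]
      fun u => -(√Var[id; G₂] / √Var[id; G₁]) * quantile G₁ u + b := by
  have hid := MeasurePreserving.id unif01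
  have hsub := measurePreserving_one_sub_unif01
  rw [← variance_quantile_comp (G := G₁) hid, ← variance_quantile_comp (G := G₂) hsub]
  exact exists_ae_eq_mul_add_of_pearson_eq_neg_one (aemeasurable_quantile G₁)
    (aemeasurable_quantile_comp hsub) ((transformedRankCorr_map_prodMk hid hsub).symm.trans h)

lemma sqrt_variance_div_pos_of_transformedRankCorr_ne_zero (hC : IsCopula C)
    (h : transformedRankCorr G₁ G₂ C ≠ 0) : 0 < √Var[id; G₂] / √Var[id; G₁] := by
  obtain ⟨⟨hG₁, hnondeg₁⟩, hG₂, hnondeg₂⟩ :=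
    finiteSecondMoment_and_nondegenerate_of_transformedRankCorr_ne_zero hC h
  have hvar₁ := (nondegenerate_iff_variance_ne_zero hG₁).1 hnondeg₁
  have hvar₂ := (nondegenerate_iff_variance_ne_zero hG₂).1 hnondeg₂
  exact div_pos (Real.sqrt_pos.2 ((variance_nonneg id G₂).lt_of_ne' hvar₂))
    (Real.sqrt_pos.2 ((variance_nonneg id G₁).lt_of_ne' hvar₁))

lemma sameType_of_transformedRankCorr_comonCopula_eq_one
    (h : transformedRankCorr G₁ G₂ comonCopula = 1) : SameType G₂ G₁ := by
  obtain ⟨b, hb⟩ := exists_quantile_ae_eq_of_transformedRankCorr_comonCopula_eq_one h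
  refine ⟨_, b, sqrt_variance_div_pos_of_transformedRankCorr_ne_zero isCopula_comonCopula
    (h.trans_ne one_ne_zero), ?_⟩
  calc G₂
    _ = unif01.map (fun u => √Var[id; G₂] / √Var[id; G₁] * quantile G₁ u + b) :=
      (map_quantile G₂).symm.trans (Measure.map_congr hb)
    _ = G₁.map (fun x => √Var[id; G₂] / √Var[id; G₁] * x + b) :=
      map_comp_quantile_comp (T := fun x => √Var[id; G₂] / √Var[id; G₁] * x + b) (by fun_prop)
        (MeasurePreserving.id unif01)

lemma symmetricDist_of_transformedRankCorr_eq_one_of_eq_neg_one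
    (hM : transformedRankCorr G₁ G₂ comonCopula = 1)
    (hW : transformedRankCorr G₁ G₂ counterCopula = -1) : SymmetricDist G₁ := by
  have hslope := sqrt_variance_div_pos_of_transformedRankCorr_ne_zero isCopula_comonCopula
    (hM.trans_ne one_ne_zero)
  obtain ⟨b, hb⟩ := exists_quantile_ae_eq_of_transformedRankCorr_comonCopula_eq_one hM
  obtain ⟨d, hd⟩ := exists_quantile_one_sub_ae_eq_of_transformedRankCorr_counterCopula_eq_neg_one hW
  set a := √Var[id; G₂] / √Var[id; G₁]
  refine ⟨(d - b) / (2 * a), map_const_sub_eq_self_iff.2 ?_⟩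
  have hreflect := measurePreserving_one_sub_unif01.quasiMeasurePreserving.ae_eq_comp hb
  filter_upwards [hreflect, hd] with u hbu hdu
  have hcancel : a * quantile G₁ (1 - u) + b = -a * quantile G₁ u + d := hbu.symm.trans hdu
  field_simp
  linarith

end TransformedRankCorr

/-- the (G1,G2)-transformed rank correlation coefficient
`κ_{G1,G2}(C) = ρ(G1⁻¹(U1), G2⁻¹(U2))` for `(U1,U2) ~ C` is a measure of concordance
in the sense of Scarsini if and only if both `G1` and `G2` are of the same type as some
non-degenerate symmetric distribution `G` with finite second moment. -/
theorem transformed_rank_corr_concordance_iff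
    (ν1 ν2 : Measure ℝ) [IsProbabilityMeasure ν1] [IsProbabilityMeasure ν2] :
    IsConcordanceMeasure (fun C => pearson C
        (fun p => quantileFn (cdfOf ν1) p.1) (fun p => quantileFn (cdfOf ν2) p.2))
      ↔ ∃ G : Measure ℝ, IsProbabilityMeasure G ∧ Nondegenerate G ∧ SymmetricDist G ∧
          FiniteSecondMoment G ∧ SameType ν1 G ∧ SameType ν2 G := by
  constructor
  · intro h
    have hM : transformedRankCorr ν1 ν2 comonCopula = 1 := h.comonotone_val
    have hW : transformedRankCorr ν1 ν2 counterCopula = -1 := h.countermonotone_val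
    obtain ⟨⟨hfinite, hnondeg⟩, -⟩ :=
      finiteSecondMoment_and_nondegenerate_of_transformedRankCorr_ne_zero isCopula_comonCopula
        (hM.trans_ne one_ne_zero)
    exact ⟨ν1, inferInstance, hnondeg,
      symmetricDist_of_transformedRankCorr_eq_one_of_eq_neg_one hM hW, hfinite,
      ⟨1, 0, one_pos, by simp⟩, sameType_of_transformedRankCorr_comonCopula_eq_one hM⟩
  · rintro ⟨G, _, hnondeg, hsymm, hfinite, htype₁, htype₂⟩
    exact (isConcordanceMeasure_transformedRankCorr_self hnondeg hsymm hfinite).congr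
      fun C hC => transformedRankCorr_congr_of_sameType htype₁ htype₂ hfinite hfinite hC
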